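/- arXiv:2410.23816 — 3 statements merged into one kernel-verified Lean document; each statement's English description precedes it below -/
import Mathlib

section
/- Let A ∈ ℝ^{n×n} be symmetric positive semidefinite, B ∈ ℝ^{n×n} symmetric positive definite, and let U ∈ ℝ^{n×n} be invertible with U^T·A·U = D = diag(λ_1,…,λ_n) where λ_1 ≤ … ≤ λ_n, and U^T·B·U = I_n. Fix 1 ≤ r < n, let U_2 ∈ ℝ^{n×r} be the last r columns of U, D_2 = diag(λ_{n−r+1},…,λ_n), and V = B·U_2. Let f, g be real-valued functions defined on {λ_{n−r+1},…,λ_n} with 1 + g(λ_k) > 0 for each k > n−r, and define Ā = A + V·f(D_2)·V^T and B̄ = B + V·g(D_2)·V^T. Then for each k = 1,…,n the k-th column u_k of U satisfies: Ā·u_k = λ_k·B̄·u_k if k ≤ n−r, and Ā·u_k = ((λ_k + f(λ_k))/(1 + g(λ_k)))·B̄·u_k if k > n−r. In particular the eigenvectors of (A,B) and (Ā,B̄) coincide. -/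
open Matrix

/-!
Congruence by `U` turns `V = B * U₂` into a matrix of standard basis vectors, because
`Uᵀ * B * U = 1`. Hence `U` simultaneously diagonalizes the deflated pair, the deflation only
shifting the selected diagonal entries. Cancelling the invertible `Uᵀ` shows that each column of
`U` is an eigenvector, with eigenvalue the quotient of the two diagonal entries.
-/

theorem one_submatrix_mul_diagonal_mul_transpose {R m p : Type*} [NonAssocSemiring R]
    [Fintype m] [DecidableEq m] [DecidableEq p] {e : m → p} (he : Function.Injective e)
    (d : p → R) :
    (1 : Matrix p p R).submatrix id e * diagonal (d ∘ e) * ((1 : Matrix p p R).submatrix id e)ᵀ =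
      diagonal ((Set.range e).indicator d) := by
  ext i k
  rw [mul_apply]
  simp only [mul_diagonal, transpose_apply, submatrix_apply, id_eq, one_apply,
    Function.comp_apply]
  by_cases hi : i ∈ Set.range e
  · obtain ⟨j, rfl⟩ := hi
    simp only [he.eq_iff, ite_mul, one_mul, zero_mul, Finset.sum_ite_eq, Finset.mem_univ]
    simp [diagonal_apply, eq_comm]
  · have hne (j : m) : i ≠ e j := fun h => hi ⟨j, h.symm⟩
    simp [hne, hi, diagonal_apply]

section CommSemiring

variable {R l m n p : Type*} [CommSemiring R]

theorem smul_mulVec_col_eq_of_mul_mul_eq_diagonal [Fintype m] [Fintype p] [DecidableEq l]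
    {W : Matrix l m R} (hW : Function.Injective W.mulVec) {A B : Matrix m p R}
    {U : Matrix p l R} {α β : l → R} (hA : W * A * U = diagonal α)
    (hB : W * B * U = diagonal β) (k : l) :
    β k • (A *ᵥ U.col k) = α k • (B *ᵥ U.col k) := by
  have mulVec_col {M : Matrix m p R} {d : l → R} (hM : W * M * U = diagonal d) :
      W *ᵥ (M *ᵥ U.col k) = Pi.single k (d k) := by
    rw [mulVec_mulVec, ← col_diagonal, ← hM]
    rfl
  apply hW
  simp only [mulVec_smul, mulVec_col hA, mulVec_col hB, ← Pi.single_smul, smul_eq_mul, mul_comm]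

theorem transpose_mul_deflation_mul [Fintype m] [DecidableEq m] [Fintype n] [DecidableEq p]
    {B M : Matrix n n R} {U : Matrix n p R} (hB : Uᵀ * B * U = 1) {α : p → R}
    (hM : Uᵀ * M * U = diagonal α) {e : m → p} (he : Function.Injective e) (d : p → R)
    {V : Matrix n m R} (hV : V = B * U.submatrix id e) :
    Uᵀ * (M + V * diagonal (d ∘ e) * Vᵀ) * U =
      diagonal (α + (Set.range e).indicator d) := by
  have hUV : Uᵀ * V = (1 : Matrix p p R).submatrix id e := by
    rw [hV, ← Matrix.mul_assoc, ← hB]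
    rfl
  calc Uᵀ * (M + V * diagonal (d ∘ e) * Vᵀ) * U
      = Uᵀ * M * U + (Uᵀ * V) * diagonal (d ∘ e) * (Uᵀ * V)ᵀ := by
        simp only [Matrix.mul_add, Matrix.add_mul, transpose_mul, transpose_transpose,
          Matrix.mul_assoc]
    _ = diagonal (α + (Set.range e).indicator d) := by
        rw [hM, hUV, one_submatrix_mul_diagonal_mul_transpose he, diagonal_add]
        rfl

end CommSemiring

theorem injective_of_val_eq_add {n r s : ℕ} {e : Fin r → Fin n}
    (he : ∀ j, (e j : ℕ) = s + j) : Function.Injective e := by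
  intro i j hij
  refine Fin.ext (Nat.add_left_cancel (n := s) ?_)
  rw [← he, ← he, hij]

theorem mem_range_iff_le_of_val_eq_add {n r s : ℕ} (hn : n ≤ s + r) {e : Fin r → Fin n}
    (he : ∀ j, (e j : ℕ) = s + j) (k : Fin n) : k ∈ Set.range e ↔ s ≤ (k : ℕ) := by
  constructor
  · rintro ⟨j, rfl⟩
    exact (Nat.le_add_right s j).trans_eq (he j).symm
  · intro hk
    refine ⟨⟨k - s, by omega⟩, Fin.ext ?_⟩
    rw [he, Nat.add_sub_cancel' hk]

theorem deflation_eigenpairs_general {K m n : Type*} [Field K] [Fintype m] [DecidableEq m]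
    [Fintype n] [DecidableEq n] {A B U : Matrix n n K} {lam : n → K}
    (hUAU : Uᵀ * A * U = diagonal lam) (hUBU : Uᵀ * B * U = 1) {f g : K → K}
    {e : m → n} (he : Function.Injective e) (hg : ∀ k ∈ Set.range e, 1 + g (lam k) ≠ 0)
    {V : Matrix n m K} (hV : V = B * U.submatrix id e) {Abar Bbar : Matrix n n K}
    (hAbar : Abar = A + V * diagonal (fun j => f (lam (e j))) * Vᵀ)
    (hBbar : Bbar = B + V * diagonal (fun j => g (lam (e j))) * Vᵀ) (k : n) :
    (k ∉ Set.range e → Abar *ᵥ U.col k = lam k • (Bbar *ᵥ U.col k)) ∧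
      (k ∈ Set.range e →
        Abar *ᵥ U.col k = ((lam k + f (lam k)) / (1 + g (lam k))) • (Bbar *ᵥ U.col k)) := by
  have hUt : Function.Injective Uᵀ.mulVec :=
    mulVec_injective_of_isUnit (.of_mul_eq_one (B * U) (by rwa [← Matrix.mul_assoc]))
  have hA : Uᵀ * Abar * U = diagonal (lam + (Set.range e).indicator (f ∘ lam)) :=
    hAbar ▸ transpose_mul_deflation_mul hUBU hUAU he (f ∘ lam) hV
  have hB : Uᵀ * Bbar * U = diagonal (1 + (Set.range e).indicator (g ∘ lam)) :=
    hBbar ▸ transpose_mul_deflation_mul hUBU (hUBU.trans diagonal_one.symm) he (g ∘ lam) hV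
  have hpencil := smul_mulVec_col_eq_of_mul_mul_eq_diagonal hUt hA hB k
  constructor <;> intro hk
  · simpa [hk] using hpencil
  · rw [div_eq_inv_mul, mul_smul, eq_inv_smul_iff₀ (hg k hk)]
    simpa [hk] using hpencil

/-- **Global deflation preserves eigenvectors** (Theorem 4.3 of Voet et al.).
Let `A ⪰ 0` be symmetric, `B ≻ 0` symmetric, `U` invertible with `Uᵀ·A·U = diag(λ_1,…,λ_n)`
(`λ` ascending) and `Uᵀ·B·U = I`. Fix `1 ≤ r < n`, let `U₂` be the last `r` columns of `U`,
`D₂ = diag(λ_{n−r+1},…,λ_n)`, `V = B·U₂`, and for functions `f, g` with `1 + g(λ_k) > 0` for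
`k > n − r`, set `Ā = A + V·f(D₂)·Vᵀ` and `B̄ = B + V·g(D₂)·Vᵀ`. Then every column `u_k` of
`U` is a generalized eigenvector of `(Ā, B̄)`: with eigenvalue `λ_k` if `k ≤ n − r` and with
eigenvalue `(λ_k + f(λ_k))/(1 + g(λ_k))` if `k > n − r`. -/
theorem deflation_eigenpairs {n r : ℕ} (hr1 : 1 ≤ r) (hrn : r < n)
    (A B : Matrix (Fin n) (Fin n) ℝ) (hA : A.PosSemidef) (hB : B.PosDef)
    (U : Matrix (Fin n) (Fin n) ℝ) (hU : IsUnit U.det)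
    (lam : Fin n → ℝ) (hlam : Monotone lam)
    (hUAU : Uᵀ * A * U = Matrix.diagonal lam)
    (hUBU : Uᵀ * B * U = 1)
    (f g : ℝ → ℝ)
    (hg : ∀ k : Fin n, n - r ≤ (k : ℕ) → 0 < 1 + g (lam k))
    (emb : Fin r → Fin n) (hemb : ∀ j : Fin r, (emb j : ℕ) = n - r + (j : ℕ))
    (V : Matrix (Fin n) (Fin r) ℝ) (hV : V = B * U.submatrix id emb)
    (Abar Bbar : Matrix (Fin n) (Fin n) ℝ)
    (hAbar : Abar = A + V * Matrix.diagonal (fun j => f (lam (emb j))) * Vᵀ)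
    (hBbar : Bbar = B + V * Matrix.diagonal (fun j => g (lam (emb j))) * Vᵀ) :
    ∀ k : Fin n,
      ((k : ℕ) < n - r →
        Abar *ᵥ (fun i => U i k) = lam k • (Bbar *ᵥ fun i => U i k)) ∧
      (n - r ≤ (k : ℕ) →
        Abar *ᵥ (fun i => U i k) =
          ((lam k + f (lam k)) / (1 + g (lam k))) • (Bbar *ᵥ fun i => U i k)) := by
  have hrange := mem_range_iff_le_of_val_eq_add le_tsub_add hemb
  intro k
  simpa only [hrange, not_le] using! deflation_eigenpairs_general hUAU hUBU
    (injective_of_val_eq_add hemb) (fun i hi => (hg i ((hrange i).1 hi)).ne') hV hAbar hBbar k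
end

section
/- Let A ∈ ℝ^{n×n} be symmetric positive semidefinite, B ∈ ℝ^{n×n} symmetric positive definite, and let U ∈ ℝ^{n×n} be invertible with U^T·A·U = D = diag(λ_1,…,λ_n), λ_1 ≤ … ≤ λ_n, and U^T·B·U = I_n. Fix 1 ≤ r < n and assume λ_{n−r} > 0. Let U_2 ∈ ℝ^{n×r} be the last r columns of U, V = B·U_2, and define the scaled mass matrix B̄ = B + V·g(D_2)·V^T with g(λ) = λ/λ_{n−r} − 1 and D_2 = diag(λ_{n−r+1},…,λ_n). Then the generalized eigenvalues of (A, B̄) listed in ascending order with multiplicity are λ̄_k = λ_k for k = 1,…,n−r and λ̄_k = λ_{n−r} for k = n−r+1,…,n. -/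
open Matrix

/-- The eigenvalues of a symmetric real matrix listed in ascending order with multiplicity. -/
noncomputable def sortedEigs {n : ℕ} (M : Matrix (Fin n) (Fin n) ℝ) : Fin n → ℝ :=
  if h : M.IsHermitian then h.eigenvalues ∘ Tuple.sort h.eigenvalues else 0

-- The generalized eigenvalues `λ_1(A,B) ≤ … ≤ λ_n(A,B)`: the eigenvalues of
-- `B^{-1/2} A B^{-1/2}` in ascending order with multiplicity (`B` positive definite).
open Classical in
open scoped MatrixOrder in
noncomputable def genEigs {n : ℕ} (A B : Matrix (Fin n) (Fin n) ℝ) : Fin n → ℝ :=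
  if hB : B.PosDef then sortedEigs ((CFC.sqrt B)⁻¹ * A * (CFC.sqrt B)⁻¹) else 0

/-!
The congruence `U` that takes `(A, B)` to `(diag λ, 1)` also diagonalizes the rank-`r` update of
`B`, so it takes `(A, B̄)` to `(diag λ, diag d)` with `d = λ / c` on the deflated indices and
`d = 1` elsewhere, `c = λ_{n-r}` being the deflation level. As the deflated eigenvalues are those
above `c`, this is `d = max (λ / c) 1`, and the generalized eigenvalues become `λ / d = min λ c`,
which are already in ascending order because truncation is monotone.
-/

section Spectrum

variable {n : ℕ}

theorem comp_sort_eq_of_map_univ_eq {α : Type*} [LinearOrder α] {f g : Fin n → α}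
    (h : Finset.univ.val.map f = Finset.univ.val.map g) (hg : Monotone g) :
    f ∘ Tuple.sort f = g := by
  have hperm : (List.ofFn f).Perm (List.ofFn g) := by
    rw [← Multiset.coe_eq_coe]
    simpa only [Fin.univ_val_map] using h
  exact List.ofFn_injective <| List.Perm.eq_of_sortedLE
    (Tuple.monotone_sort f).sortedLE_ofFn hg.sortedLE_ofFn
    ((Equiv.Perm.ofFn_comp_perm _ f).trans hperm)

theorem roots_charpoly_diagonal {ι R : Type*} [Fintype ι] [DecidableEq ι] [CommRing R]
    [IsDomain R] (d : ι → R) : (diagonal d).charpoly.roots = Finset.univ.val.map d := by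
  rw [charpoly_diagonal, Polynomial.roots_prod _ _
    (Finset.prod_ne_zero_iff.mpr fun i _ => Polynomial.X_sub_C_ne_zero (d i))]
  simp only [Polynomial.roots_X_sub_C, Multiset.bind_singleton]

theorem sortedEigs_eq_of_charpoly_eq {M : Matrix (Fin n) (Fin n) ℝ} {μ : Fin n → ℝ}
    (hM : M.IsHermitian) (hμ : Monotone μ) (h : M.charpoly = (diagonal μ).charpoly) :
    sortedEigs M = μ := by
  rw [sortedEigs, dif_pos hM]
  refine comp_sort_eq_of_map_univ_eq ?_ hμ
  rw [← roots_charpoly_diagonal μ, ← h, hM.roots_charpoly_eq_eigenvalues]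
  rfl

open scoped MatrixOrder in
theorem genEigs_eq_of_charpoly_eq {A B : Matrix (Fin n) (Fin n) ℝ} {μ : Fin n → ℝ}
    (hA : A.IsHermitian) (hB : B.PosDef) (hμ : Monotone μ)
    (h : (B⁻¹ * A).charpoly = (diagonal μ).charpoly) : genEigs A B = μ := by
  rw [genEigs, dif_pos hB]
  have hsqrt : (CFC.sqrt B)⁻¹.IsHermitian :=
    (nonneg_iff_posSemidef.mp (CFC.sqrt_nonneg B)).isHermitian.inv
  have hinv : (CFC.sqrt B)⁻¹ * (CFC.sqrt B)⁻¹ = B⁻¹ := by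
    rw [← Matrix.mul_inv_rev, CFC.sqrt_mul_sqrt_self B hB.posSemidef.nonneg]
  refine sortedEigs_eq_of_charpoly_eq ?_ hμ ?_
  · simpa only [hsqrt.eq] using isHermitian_mul_mul_conjTranspose (CFC.sqrt B)⁻¹ hA
  · rw [charpoly_mul_comm, ← Matrix.mul_assoc, hinv, h]

end Spectrum

section SimultaneousDiagonalization

variable {n : Type*} [Fintype n] [DecidableEq n]

theorem isHermitian_of_transpose_mul_mul_eq_diagonal
    {A U : Matrix n n ℝ} {a : n → ℝ} (hU : IsUnit U) (h : Uᵀ * A * U = diagonal a) :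
    A.IsHermitian := by
  rw [← conjTranspose_eq_transpose_of_trivial, ← star_eq_conjTranspose] at h
  exact hU.isSelfAdjoint_conjugate_iff'.mp (h ▸ isHermitian_diagonal a)

theorem posDef_of_transpose_mul_mul_eq_diagonal
    {B U : Matrix n n ℝ} {d : n → ℝ} (hU : IsUnit U) (h : Uᵀ * B * U = diagonal d)
    (hd : ∀ i, 0 < d i) : B.PosDef := by
  rw [← conjTranspose_eq_transpose_of_trivial, ← star_eq_conjTranspose] at h
  exact hU.posDef_star_left_conjugate_iff.mp (h ▸ PosDef.diagonal hd)

theorem charpoly_inv_mul_eq_charpoly_diagonal_div {K : Type*} [Field K]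
    {A B U : Matrix n n K} {a d : n → K} (hU : IsUnit U)
    (hA : Uᵀ * A * U = diagonal a) (hB : Uᵀ * B * U = diagonal d) (hd : ∀ i, d i ≠ 0) :
    (B⁻¹ * A).charpoly = (diagonal (a / d)).charpoly := by
  have hUdet : IsUnit U.det := (isUnit_iff_isUnit_det U).mp hU
  have hinv : B⁻¹ = U * (diagonal d)⁻¹ * Uᵀ := by
    rw [← hB, Matrix.mul_inv_rev, Matrix.mul_inv_rev, mul_nonsing_inv_cancel_left _ _ hUdet,
      nonsing_inv_mul_cancel_right _ _ (isUnit_det_transpose U hUdet)]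
  have hdiag : (diagonal d)⁻¹ = diagonal d⁻¹ := by
    refine inv_eq_left_inv ?_
    rw [diagonal_mul_diagonal, ← diagonal_one]
    exact congrArg diagonal (funext fun i => inv_mul_cancel₀ (hd i))
  calc (B⁻¹ * A).charpoly = (U * (diagonal d⁻¹ * (Uᵀ * A))).charpoly := by
        rw [hinv, hdiag]; simp only [Matrix.mul_assoc]
    _ = (diagonal d⁻¹ * (Uᵀ * A * U)).charpoly := by
        rw [charpoly_mul_comm]; simp only [Matrix.mul_assoc]
    _ = (diagonal (a / d)).charpoly := by
        rw [hA, diagonal_mul_diagonal, div_eq_inv_mul]; rfl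

end SimultaneousDiagonalization

theorem genEigs_eq_div_of_simultaneous_diagonalization {n : ℕ}
    {A B U : Matrix (Fin n) (Fin n) ℝ} {a d : Fin n → ℝ} (hU : IsUnit U)
    (hA : Uᵀ * A * U = diagonal a) (hB : Uᵀ * B * U = diagonal d) (hd : ∀ i, 0 < d i)
    (hmono : Monotone (a / d)) : genEigs A B = a / d :=
  genEigs_eq_of_charpoly_eq (isHermitian_of_transpose_mul_mul_eq_diagonal hU hA)
    (posDef_of_transpose_mul_mul_eq_diagonal hU hB hd) hmono
    (charpoly_inv_mul_eq_charpoly_diagonal_div hU hA hB fun i => (hd i).ne')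

section ScaledMass

variable {n ι R : Type*} [Fintype ι] [DecidableEq ι] [CommRing R]

theorem submatrix_one_mul_diagonal_mul_transpose [DecidableEq n] {s : ι → n}
    (hs : Function.Injective s) (g : ι → R) :
    (1 : Matrix n n R).submatrix id s * diagonal g * ((1 : Matrix n n R).submatrix id s)ᵀ =
      diagonal (Function.extend s g 0) := by
  ext i j
  rw [mul_apply]
  simp only [mul_diagonal, submatrix_apply, transpose_apply, id, one_apply, diagonal_apply,
    ite_mul, one_mul, zero_mul]
  by_cases hi : ∃ k, s k = i
  · obtain ⟨k, rfl⟩ := hi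
    simp only [hs.eq_iff, hs.extend_apply, Finset.sum_ite_eq, Finset.mem_univ, if_true, mul_ite,
      mul_one, mul_zero, eq_comm]
  · have hne : ∀ k, i ≠ s k := fun k hk => hi ⟨k, hk.symm⟩
    simp [hne, Function.extend_apply' _ _ _ hi]

/-- The scaled mass matrix `B̄ = B + V·diag(g)·Vᵀ` with `V = B·U_s`, where `U_s` consists of the
columns of `U` selected by `s`. -/
def scaledMass [Fintype n] (B U : Matrix n n R) (s : ι → n) (g : ι → R) : Matrix n n R :=
  B + B * U.submatrix id s * diagonal g * (B * U.submatrix id s)ᵀ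

theorem transpose_mul_scaledMass_mul [Fintype n] [DecidableEq n]
    {B U : Matrix n n R} {s : ι → n} (hs : Function.Injective s) (hUBU : Uᵀ * B * U = 1)
    (g : ι → R) : Uᵀ * scaledMass B U s g * U = diagonal (1 + Function.extend s g 0) := by
  have hUV : Uᵀ * (B * U.submatrix id s) = (1 : Matrix n n R).submatrix id s := by
    rw [← hUBU, ← Matrix.mul_assoc]; rfl
  have hVU : (B * U.submatrix id s)ᵀ * U = ((1 : Matrix n n R).submatrix id s)ᵀ := by
    rw [← hUV, transpose_mul Uᵀ, transpose_transpose]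
  calc Uᵀ * scaledMass B U s g * U
      = Uᵀ * B * U +
          Uᵀ * (B * U.submatrix id s) * diagonal g * ((B * U.submatrix id s)ᵀ * U) := by
        simp only [scaledMass, Matrix.mul_add, Matrix.add_mul, Matrix.mul_assoc]
    _ = diagonal (1 + Function.extend s g 0) := by
        rw [hUBU, hUV, hVU, submatrix_one_mul_diagonal_mul_transpose hs, ← diagonal_one,
          diagonal_add]
        rfl

end ScaledMass

section Truncation

theorem one_add_extend_div_sub_one_eq_max {n ι K : Type*} [Field K] [LinearOrder K]
    [IsStrictOrderedRing K] {s : ι → n} {lam : n → K} {c : K} (hs : Function.Injective s)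
    (hc : 0 < c) (htop : ∀ j, c ≤ lam (s j)) (hrest : ∀ i ∉ Set.range s, lam i ≤ c) :
    1 + Function.extend s (fun j => lam (s j) / c - 1) 0 = fun i => max (lam i / c) 1 := by
  ext i
  by_cases hi : i ∈ Set.range s
  · obtain ⟨j, rfl⟩ := hi
    rw [Pi.add_apply, hs.extend_apply, Pi.one_apply, add_sub_cancel,
      max_eq_left ((one_le_div hc).mpr (htop j))]
  · rw [Pi.add_apply, Function.extend_apply' _ _ _ hi, Pi.one_apply, Pi.zero_apply, add_zero,
      max_eq_right ((div_le_one hc).mpr (hrest i hi))]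

theorem div_max_div_one {K : Type*} [Field K] [LinearOrder K] [IsStrictOrderedRing K] {c : K}
    (hc : 0 < c) (x : K) : x / max (x / c) 1 = min x c := by
  rcases le_total x c with hx | hx
  · rw [max_eq_right ((div_le_one hc).mpr hx), min_eq_left hx, div_one]
  · rw [max_eq_left ((one_le_div hc).mpr hx), min_eq_right hx,
      div_div_cancel₀ (hc.trans_le hx).ne']

end Truncation

section LastIndices

variable {n r : ℕ} {emb : Fin r → Fin n}

theorem injective_of_val_eq_sub_add (hemb : ∀ j, (emb j : ℕ) = n - r + j) :
    Function.Injective emb := fun i j hij =>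
  Fin.ext <| Nat.add_left_cancel <| hemb i ▸ hemb j ▸ congrArg Fin.val hij

theorem range_eq_Ioi_of_val_eq_sub_add {p : Fin n} (hp : (p : ℕ) + 1 = n - r)
    (hemb : ∀ j, (emb j : ℕ) = n - r + j) : Set.range emb = Set.Ioi p := by
  ext i
  rw [Set.mem_range, Set.mem_Ioi, Fin.lt_def]
  constructor
  · rintro ⟨j, rfl⟩
    have := hemb j
    omega
  · intro hi
    refine ⟨⟨i - (n - r), by omega⟩, Fin.ext ?_⟩
    rw [hemb]
    exact Nat.add_sub_cancel' (by omega)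

theorem min_apply_eq_ite_of_monotone {α : Type*} [LinearOrder α] {f : Fin n → α}
    (hf : Monotone f) {p : Fin n} {m : ℕ} (hp : (p : ℕ) + 1 = m) (k : Fin n) :
    min (f k) (f p) = if (k : ℕ) < m then f k else f p := by
  subst hp
  split_ifs with hk
  · exact min_eq_left (hf (Fin.le_def.mpr (Nat.lt_succ_iff.mp hk)))
  · exact min_eq_right (hf (Fin.le_def.mpr (Nat.le_of_lt (not_lt.mp hk))))

end LastIndices

theorem deflation_truncates_spectrum_general {n : ℕ} {ι : Type*} [Fintype ι] [DecidableEq ι]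
    {A B U : Matrix (Fin n) (Fin n) ℝ} {lam : Fin n → ℝ} (hlam : Monotone lam)
    (hUAU : Uᵀ * A * U = diagonal lam) (hUBU : Uᵀ * B * U = 1)
    {c : ℝ} (hc : 0 < c) {s : ι → Fin n} (hs : Function.Injective s)
    (htop : ∀ j, c ≤ lam (s j)) (hrest : ∀ i ∉ Set.range s, lam i ≤ c) :
    genEigs A (scaledMass B U s fun j => lam (s j) / c - 1) = fun k => min (lam k) c := by
  have hU : IsUnit U := IsUnit.of_mul_eq_one_right _ hUBU
  have hBbar := transpose_mul_scaledMass_mul hs hUBU fun j => lam (s j) / c - 1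
  rw [one_add_extend_div_sub_one_eq_max hs hc htop hrest] at hBbar
  have hdiv : (lam / fun i => max (lam i / c) 1) = fun k => min (lam k) c :=
    funext fun k => div_max_div_one hc (lam k)
  rw [← hdiv]
  refine genEigs_eq_div_of_simultaneous_diagonalization hU hUAU hBbar
    (fun i => lt_max_of_lt_right one_pos) ?_
  rw [hdiv]
  exact hlam.min monotone_const

/-- **Global deflation / mass scaling shaves off the top of the spectrum.**
Let `A ⪰ 0` symmetric, `B ≻ 0` symmetric, `U` invertible with `Uᵀ·A·U = diag(λ_1,…,λ_n)`
(`λ` ascending), `Uᵀ·B·U = I`, `1 ≤ r < n` and `λ_{n−r} > 0`. With `U₂` the last `r` columns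
of `U`, `V = B·U₂` and scaled mass matrix `B̄ = B + V·g(D₂)·Vᵀ` where `g(λ) = λ/λ_{n−r} − 1`,
the generalized eigenvalues of `(A, B̄)` in ascending order are `λ_k` for `k ≤ n − r` and
`λ_{n−r}` for `k > n − r`. -/
theorem deflation_truncates_spectrum {n r : ℕ} (hr1 : 1 ≤ r) (hrn : r < n)
    (A B : Matrix (Fin n) (Fin n) ℝ) (hA : A.PosSemidef) (hB : B.PosDef)
    (U : Matrix (Fin n) (Fin n) ℝ) (hU : IsUnit U.det)
    (lam : Fin n → ℝ) (hlam : Monotone lam)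
    (hUAU : Uᵀ * A * U = Matrix.diagonal lam)
    (hUBU : Uᵀ * B * U = 1)
    (hpos : 0 < lam ⟨n - r - 1, by omega⟩)
    (emb : Fin r → Fin n) (hemb : ∀ j : Fin r, (emb j : ℕ) = n - r + (j : ℕ))
    (V : Matrix (Fin n) (Fin r) ℝ) (hV : V = B * U.submatrix id emb)
    (Bbar : Matrix (Fin n) (Fin n) ℝ)
    (hBbar : Bbar = B +
      V * Matrix.diagonal (fun j => lam (emb j) / lam ⟨n - r - 1, by omega⟩ - 1) * Vᵀ) :
    ∀ k : Fin n,
      genEigs A Bbar k =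
        if (k : ℕ) < n - r then lam k else lam ⟨n - r - 1, by omega⟩ := by
  intro k
  have hp : n - r - 1 + 1 = n - r := Nat.sub_add_cancel (Nat.sub_pos_of_lt hrn)
  have hrange := range_eq_Ioi_of_val_eq_sub_add (p := ⟨n - r - 1, by omega⟩) hp hemb
  rw [hBbar, hV, ← min_apply_eq_ite_of_monotone hlam hp]
  exact congrFun (deflation_truncates_spectrum_general hlam hUAU hUBU hpos
    (injective_of_val_eq_sub_add hemb) (fun j => hlam (hrange.subset ⟨j, rfl⟩).le)
    (fun i hi => hlam (not_lt.mp fun hlt => hi (hrange.superset hlt)))) k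
end

section
/- Let A = Σ_{e=1}^N L_e^T·A_e·L_e be an assembled finite element matrix where each element matrix A_e ∈ ℝ^{m×m} is symmetric positive semidefinite. Then: (1) max_e λ_max(A_e) ≤ λ_max(A) ≤ p_max · max_e λ_max(A_e), and (2) min_e λ_min(A_e) ≤ λ_min(A), where λ_min and λ_max denote the smallest and largest eigenvalue of a symmetric matrix. -/
open Matrix

/-- The smallest and largest eigenvalues of a symmetric matrix. -/
noncomputable def lamMin {n : ℕ} (M : Matrix (Fin (n+1)) (Fin (n+1)) ℝ) : ℝ := sortedEigs M 0
noncomputable def lamMax {n : ℕ} (M : Matrix (Fin (n+1)) (Fin (n+1)) ℝ) : ℝ :=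
  sortedEigs M (Fin.last n)

/-- The Boolean connectivity matrix `L_e` of an element whose local-to-global map is `σ`:
its rows are the standard basis vectors of `ℝ^n` selected by `σ`. -/
def elemL {ι : Type*} {n : ℕ} (σ : ι → Fin n) : Matrix ι (Fin n) ℝ :=
  Matrix.of fun i j => if σ i = j then 1 else 0

/-!
For symmetric `M`, `λ_max(M) ≤ c` and `c ≤ λ_min(M)` mean `M ≤ c I` and `c I ≤ M` in the Loewner
order. Assembly is monotone for this order, and it sends the identity element matrices to
`∑ₑ Lₑᵀ Lₑ`, the diagonal matrix of node multiplicities, whose entries lie between `1` and `p_max`;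
this gives both bounds by element eigenvalues. Conversely `Lₑ Lₑᵀ = I`, so
`Aₑ = Lₑ (Lₑᵀ Aₑ Lₑ) Lₑᵀ ≤ Lₑ A Lₑᵀ ≤ λ_max(A) I`.
-/

section LoewnerOrder

open scoped MatrixOrder

variable {ι κ : Type*} {X Y : Matrix ι ι ℝ}

lemma diagonal_le_diagonal_iff [DecidableEq ι] {d d' : ι → ℝ} :
    diagonal d ≤ diagonal d' ↔ d ≤ d' := by
  rw [Matrix.le_iff, diagonal_sub, posSemidef_diagonal_iff]
  simp only [sub_nonneg, Pi.le_def]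

lemma transpose_mul_mul_mono [Fintype ι] [Finite κ] (L : Matrix ι κ ℝ) (h : X ≤ Y) :
    Lᵀ * X * L ≤ Lᵀ * Y * L := by
  rw [Matrix.le_iff, ← Matrix.sub_mul, ← Matrix.mul_sub, ← conjTranspose_eq_transpose_of_trivial]
  exact (Matrix.le_iff.1 h).conjTranspose_mul_mul_same L

lemma submatrix_mono (f : κ → ι) (h : X ≤ Y) : X.submatrix f f ≤ Y.submatrix f f :=
  Matrix.le_iff.2 ((Matrix.le_iff.1 h).submatrix f)

end LoewnerOrder

section ExtremeEigenvalues

open scoped MatrixOrder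

lemma sortedEigs_monotone {n : ℕ} (M : Matrix (Fin n) (Fin n) ℝ) : Monotone (sortedEigs M) := by
  unfold sortedEigs
  split_ifs with h
  · exact Tuple.monotone_sort h.eigenvalues
  · exact monotone_const

lemma range_sortedEigs {n : ℕ} {M : Matrix (Fin n) (Fin n) ℝ} (hM : M.IsHermitian) :
    Set.range (sortedEigs M) = spectrum ℝ M := by
  rw [sortedEigs, dif_pos hM, EquivLike.range_comp, hM.spectrum_real_eq_range_eigenvalues]

variable {n : ℕ} {M : Matrix (Fin (n + 1)) (Fin (n + 1)) ℝ} {c : ℝ}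

lemma lamMin_le_lamMax (M : Matrix (Fin (n + 1)) (Fin (n + 1)) ℝ) : lamMin M ≤ lamMax M :=
  sortedEigs_monotone M (Fin.zero_le _)

lemma lamMax_le_iff (hM : M.IsHermitian) : lamMax M ≤ c ↔ M ≤ c • 1 := by
  rw [← Algebra.algebraMap_eq_smul_one, le_algebraMap_iff_spectrum_le, ← range_sortedEigs hM,
    Set.forall_mem_range]
  exact ⟨fun h i ↦ (sortedEigs_monotone M (Fin.le_last i)).trans h, fun h ↦ h _⟩

lemma le_lamMin_iff (hM : M.IsHermitian) : c ≤ lamMin M ↔ c • 1 ≤ M := by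
  rw [← Algebra.algebraMap_eq_smul_one, algebraMap_le_iff_le_spectrum, ← range_sortedEigs hM,
    Set.forall_mem_range]
  exact ⟨fun h i ↦ h.trans (sortedEigs_monotone M (Fin.zero_le i)), fun h ↦ h _⟩

lemma lamMin_nonneg (hM : M.PosSemidef) : 0 ≤ lamMin M := by
  rw [le_lamMin_iff hM.isHermitian, zero_smul]
  exact hM.nonneg

lemma lamMax_nonneg (hM : M.PosSemidef) : 0 ≤ lamMax M :=
  (lamMin_nonneg hM).trans (lamMin_le_lamMax M)

end ExtremeEigenvalues

section Connectivity

variable {ι : Type*} {n : ℕ}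

lemma elemL_mul_mul_transpose (σ : ι → Fin n) (M : Matrix (Fin n) (Fin n) ℝ) :
    elemL σ * M * (elemL σ)ᵀ = M.submatrix σ σ := by
  ext i j
  simp [elemL, mul_apply]

lemma elemL_mul_transpose_self [DecidableEq ι] {σ : ι → Fin n} (hσ : Function.Injective σ) :
    elemL σ * (elemL σ)ᵀ = 1 := by
  simpa only [Matrix.mul_one, submatrix_one σ hσ] using elemL_mul_mul_transpose σ 1

lemma elemL_transpose_mul_self [Fintype ι] (σ : ι → Fin n) :
    (elemL σ)ᵀ * elemL σ = diagonal fun i ↦ (Finset.card {j | σ j = i} : ℝ) := by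
  ext i k
  obtain rfl | hik := eq_or_ne i k
  · simp [elemL, mul_apply, ← ite_and]
  · rw [diagonal_apply_ne _ hik, mul_apply]
    refine Finset.sum_eq_zero fun j _ ↦ ?_
    by_cases hj : σ j = i <;> simp [elemL, hj, hik]

end Connectivity

section Assembly

open scoped MatrixOrder

variable {ι : Type*} [Fintype ι] {κ : ι → Type*} [∀ e, Fintype (κ e)] {n : ℕ}

/-- The assembled matrix `∑ₑ Lₑᵀ Aₑ Lₑ` of a mesh with local-to-global maps `σ e`. Elements may
have different numbers `κ e` of local indices. -/
def assemble (σ : ∀ e, κ e → Fin n) (Ae : ∀ e, Matrix (κ e) (κ e) ℝ) : Matrix (Fin n) (Fin n) ℝ :=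
  ∑ e, (elemL (σ e))ᵀ * Ae e * elemL (σ e)

/-- The number of local indices, over all elements, that are mapped to the global index `i`. For
injective local-to-global maps it is the number of elements containing `i`. -/
def nodeMultiplicity (σ : ∀ e, κ e → Fin n) (i : Fin n) : ℕ :=
  ∑ e, Finset.card {j | σ e j = i}

variable {σ : ∀ e, κ e → Fin n} {Ae Be : ∀ e, Matrix (κ e) (κ e) ℝ} {c : ℝ} {p : ℕ}

lemma nodeMultiplicity_eq_card (hσ : ∀ e, Function.Injective (σ e)) (i : Fin n)
    [DecidablePred fun e ↦ ∃ j, σ e j = i] :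
    nodeMultiplicity σ i = Finset.card {e | ∃ j, σ e j = i} := by
  rw [nodeMultiplicity, Finset.card_filter]
  refine Finset.sum_congr rfl fun e _ ↦ ?_
  split_ifs with h
  · obtain ⟨j, rfl⟩ := h
    exact Finset.card_eq_one.2 ⟨j, by ext; simp [(hσ e).eq_iff]⟩
  · simpa [Finset.filter_eq_empty_iff] using h

lemma one_le_nodeMultiplicity {i : Fin n} (hi : ∃ e j, σ e j = i) : 1 ≤ nodeMultiplicity σ i := by
  obtain ⟨e, j, hj⟩ := hi
  calc 1 ≤ Finset.card {j | σ e j = i} := Finset.card_pos.2 ⟨j, by simpa using hj⟩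
    _ ≤ nodeMultiplicity σ i :=
      Finset.single_le_sum (f := fun e ↦ Finset.card {j | σ e j = i}) (fun _ _ ↦ Nat.zero_le _)
        (Finset.mem_univ e)

lemma assemble_mono (h : ∀ e, Ae e ≤ Be e) : assemble σ Ae ≤ assemble σ Be :=
  Finset.sum_le_sum fun e _ ↦ transpose_mul_mul_mono (elemL (σ e)) (h e)

lemma assemble_isHermitian (h : ∀ e, (Ae e).IsHermitian) : (assemble σ Ae).IsHermitian :=
  isSelfAdjoint_sum _ fun e _ ↦ isHermitian_conjTranspose_mul_mul (elemL (σ e)) (h e)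

lemma assemble_smul_one [∀ e, DecidableEq (κ e)] (σ : ∀ e, κ e → Fin n) (c : ℝ) :
    assemble σ (fun _ ↦ c • 1) = c • diagonal fun i ↦ (nodeMultiplicity σ i : ℝ) := by
  simp only [assemble, Matrix.mul_smul, Matrix.smul_mul, Matrix.mul_one, elemL_transpose_mul_self,
    ← Finset.smul_sum]
  congr 1
  ext i k
  obtain rfl | hik := eq_or_ne i k
  · simp [Matrix.sum_apply, nodeMultiplicity]
  · simp [Matrix.sum_apply, hik]

lemma le_submatrix_assemble {e : ι} (hσ : Function.Injective (σ e))
    (hAe : ∀ e, (Ae e).PosSemidef) : Ae e ≤ (assemble σ Ae).submatrix (σ e) (σ e) := by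
  classical
  let L := elemL (σ e)
  have hL : L * Lᵀ = 1 := elemL_mul_transpose_self hσ
  calc Ae e = L * Lᵀ * Ae e * (L * Lᵀ) := by rw [hL, Matrix.one_mul, Matrix.mul_one]
    _ = L * (Lᵀ * Ae e * L) * Lᵀ := by simp only [Matrix.mul_assoc]
    _ = (Lᵀ * Ae e * L).submatrix (σ e) (σ e) := elemL_mul_mul_transpose _ _
    _ ≤ (assemble σ Ae).submatrix (σ e) (σ e) := submatrix_mono _ <|
      Finset.single_le_sum (f := fun e ↦ (elemL (σ e))ᵀ * Ae e * elemL (σ e))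
        (fun e _ ↦ by simpa using transpose_mul_mul_mono (elemL (σ e)) (hAe e).nonneg)
        (Finset.mem_univ e)

lemma assemble_le_smul_one [∀ e, DecidableEq (κ e)] (hc : 0 ≤ c)
    (hp : ∀ i, nodeMultiplicity σ i ≤ p) (h : ∀ e, Ae e ≤ c • 1) :
    assemble σ Ae ≤ (p * c) • 1 :=
  calc assemble σ Ae ≤ assemble σ fun _ ↦ c • 1 := assemble_mono h
    _ = c • diagonal fun i ↦ (nodeMultiplicity σ i : ℝ) := assemble_smul_one σ c
    _ ≤ c • diagonal fun _ ↦ (p : ℝ) := smul_le_smul_of_nonneg_left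
      (diagonal_le_diagonal_iff.2 fun i ↦ Nat.cast_le.2 (hp i)) hc
    _ = (p * c) • 1 := by rw [← smul_one_eq_diagonal, smul_smul, mul_comm]

lemma smul_one_le_assemble [∀ e, DecidableEq (κ e)] (hc : 0 ≤ c)
    (hcover : ∀ i, ∃ e j, σ e j = i) (h : ∀ e, c • 1 ≤ Ae e) : c • 1 ≤ assemble σ Ae :=
  calc c • 1 = c • diagonal fun _ ↦ (1 : ℝ) := by rw [diagonal_one]
    _ ≤ c • diagonal fun i ↦ (nodeMultiplicity σ i : ℝ) := smul_le_smul_of_nonneg_left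
      (diagonal_le_diagonal_iff.2 fun i ↦ Nat.one_le_cast.2 (one_le_nodeMultiplicity (hcover i))) hc
    _ = assemble σ fun _ ↦ c • 1 := (assemble_smul_one σ c).symm
    _ ≤ assemble σ Ae := assemble_mono h

end Assembly

section AssembledEigenvalues

open scoped MatrixOrder

variable {ι : Type*} [Fintype ι] {m : ι → ℕ} {n : ℕ} {σ : ∀ e, Fin (m e + 1) → Fin (n + 1)}
  {Ae : ∀ e, Matrix (Fin (m e + 1)) (Fin (m e + 1)) ℝ} {c : ℝ} {p : ℕ}

lemma lamMax_le_lamMax_assemble {e : ι} (hσ : Function.Injective (σ e))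
    (hAe : ∀ e, (Ae e).PosSemidef) : lamMax (Ae e) ≤ lamMax (assemble σ Ae) := by
  have hA := (lamMax_le_iff (assemble_isHermitian (σ := σ) fun e ↦ (hAe e).isHermitian)).1 le_rfl
  rw [lamMax_le_iff (hAe e).isHermitian]
  calc Ae e ≤ (assemble σ Ae).submatrix (σ e) (σ e) := le_submatrix_assemble hσ hAe
    _ ≤ (lamMax (assemble σ Ae) • 1 : Matrix _ _ ℝ).submatrix (σ e) (σ e) := submatrix_mono _ hA
    _ = lamMax (assemble σ Ae) • 1 := by
      rw [submatrix_smul, Pi.smul_apply, Pi.smul_apply, submatrix_one _ hσ]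

lemma lamMax_assemble_le (hAe : ∀ e, (Ae e).IsHermitian) (hc : 0 ≤ c)
    (hp : ∀ i, nodeMultiplicity σ i ≤ p) (h : ∀ e, lamMax (Ae e) ≤ c) :
    lamMax (assemble σ Ae) ≤ p * c :=
  (lamMax_le_iff (assemble_isHermitian hAe)).2 <|
    assemble_le_smul_one hc hp fun e ↦ (lamMax_le_iff (hAe e)).1 (h e)

lemma le_lamMin_assemble (hAe : ∀ e, (Ae e).IsHermitian) (hc : 0 ≤ c)
    (hcover : ∀ i, ∃ e j, σ e j = i) (h : ∀ e, c ≤ lamMin (Ae e)) : c ≤ lamMin (assemble σ Ae) :=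
  (le_lamMin_iff (assemble_isHermitian hAe)).2 <|
    smul_one_le_assemble hc hcover fun e ↦ (le_lamMin_iff (hAe e)).1 (h e)

end AssembledEigenvalues

theorem assembled_eigenvalue_bounds_general {ι : Type*} [Fintype ι] [Nonempty ι] {m : ι → ℕ}
    {n pmax : ℕ} (σ : ∀ e, Fin (m e + 1) → Fin (n + 1))
    (hinj : ∀ e, Function.Injective (σ e))
    (hcover : ∀ i, ∃ e j, σ e j = i)
    (hp : ∀ i, Finset.card {e | ∃ j, σ e j = i} ≤ pmax)
    (Ae : ∀ e, Matrix (Fin (m e + 1)) (Fin (m e + 1)) ℝ)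
    (hAe : ∀ e, (Ae e).PosSemidef) :
    (Finset.univ.sup' Finset.univ_nonempty fun e ↦ lamMax (Ae e)) ≤ lamMax (assemble σ Ae) ∧
    lamMax (assemble σ Ae) ≤
      (pmax : ℝ) * Finset.univ.sup' Finset.univ_nonempty (fun e ↦ lamMax (Ae e)) ∧
    (Finset.univ.inf' Finset.univ_nonempty fun e ↦ lamMin (Ae e)) ≤ lamMin (assemble σ Ae) := by
  have hH e := (hAe e).isHermitian
  have hmult i : nodeMultiplicity σ i ≤ pmax := (nodeMultiplicity_eq_card hinj i).trans_le (hp i)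
  have hmax_nonneg : 0 ≤ Finset.univ.sup' Finset.univ_nonempty fun e ↦ lamMax (Ae e) :=
    let e := Classical.arbitrary ι
    Finset.le_sup'_of_le _ (Finset.mem_univ e) (lamMax_nonneg (hAe e))
  have hmin_nonneg : 0 ≤ Finset.univ.inf' Finset.univ_nonempty fun e ↦ lamMin (Ae e) :=
    Finset.le_inf' _ _ fun e _ ↦ lamMin_nonneg (hAe e)
  refine ⟨Finset.sup'_le _ _ fun e _ ↦ lamMax_le_lamMax_assemble (hinj e) hAe,
    lamMax_assemble_le hH hmax_nonneg hmult fun e ↦ ?_,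
    le_lamMin_assemble hH hmin_nonneg hcover fun e ↦ ?_⟩
  · exact Finset.le_sup' (fun e ↦ lamMax (Ae e)) (Finset.mem_univ e)
  · exact Finset.inf'_le (fun e ↦ lamMin (Ae e)) (Finset.mem_univ e)

/-- **Eigenvalue bounds for assembled finite element matrices** (Fried, Theorem 1).
Let `A = Σ_e L_eᵀ·A_e·L_e` be an assembled matrix with each element matrix `A_e` symmetric
positive semidefinite, where each `L_e` has distinct standard basis vectors as rows
(`σ e` injective), each global index belongs to at least one element and to at most `p_max`
elements. Then `max_e λ_max(A_e) ≤ λ_max(A) ≤ p_max · max_e λ_max(A_e)` and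
`min_e λ_min(A_e) ≤ λ_min(A)`. -/
theorem assembled_eigenvalue_bounds {N m n pmax : ℕ} (hpmax : 0 < pmax)
    (σ : Fin (N+1) → Fin (m+1) → Fin (n+1))
    (hinj : ∀ e, Function.Injective (σ e))
    (hcover : ∀ i : Fin (n+1), ∃ e j, σ e j = i)
    (hp : ∀ i : Fin (n+1), (Finset.univ.filter fun e => ∃ j, σ e j = i).card ≤ pmax)
    (Ae : Fin (N+1) → Matrix (Fin (m+1)) (Fin (m+1)) ℝ)
    (hAe : ∀ e, (Ae e).PosSemidef)
    (A : Matrix (Fin (n+1)) (Fin (n+1)) ℝ)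
    (hA : A = ∑ e, (elemL (σ e))ᵀ * Ae e * elemL (σ e)) :
    (Finset.univ.sup' Finset.univ_nonempty fun e => lamMax (Ae e)) ≤ lamMax A ∧
    lamMax A ≤ (pmax : ℝ) * Finset.univ.sup' Finset.univ_nonempty (fun e => lamMax (Ae e)) ∧
    (Finset.univ.inf' Finset.univ_nonempty fun e => lamMin (Ae e)) ≤ lamMin A := by
  subst hA
  exact assembled_eigenvalue_bounds_general σ hinj hcover hp Ae hAe
end
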